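/- Let r > 0, φ ∈ [0,π/2], and set λ = (1/2) tanh(r/2). Then for all x ∈ ℝ, det(M'(r,φ) M(r,φ)^{-1} − x I₃) = −x³ + (3λ + 1/(4λ)) x² − (1/2)(6λ² + 1) x + (16λ⁴ + 16λ² − 1 + (4λ² − 1)² cos 2φ) / (32λ), where M'(r,φ) is the entrywise derivative of M with respect to the first variable and I₃ is the 3×3 identity matrix. -/

import Mathlib

/- Context: `M(t,φ)` is the 3×3 block, corresponding to the vectors `Z, P̄ξ, F̄ξ`,
of the endomorphism `D(t)` built from Jacobi fields along a geodesic normal to the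
submanifold `W_w` in `ℂH^n`, for a unit normal `ξ` of Kähler angle `φ`;
`M'(r,φ) M(r,φ)⁻¹` is the corresponding 3×3 block of the shape operator of the
tube of radius `r` around `W_w`, and the displayed cubic is the polynomial
`q_{r,ξ}` whose roots, together with `λ` and `1/(4λ)`, are the principal
curvatures of the tube. -/

open Real

noncomputable section

/-- The 3×3 block `M(t,φ)` (in the basis `Z, P̄ξ, F̄ξ`) of the endomorphism `D(t)`
built from Jacobi fields along a geodesic normal to `W_w` in `ℂH^n`, for a unit
normal `ξ` of Kähler angle `φ`; the columns are the Jacobi fields `ζ_Z`,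
`ζ_{P̄ξ}`, `ζ_{F̄ξ}`. -/
def M (t φ : ℝ) : Matrix (Fin 3) (Fin 3) ℝ :=
  Matrix.of
    ![![cosh (t / 2),
        -(sin φ * sinh (t / 2)),
        0],
      ![-(sin φ * (cos φ ^ 2 + sin φ ^ 2 * cosh (t / 2)) * sinh (t / 2)),
        cos φ ^ 2 * cosh (t / 2) + sin φ ^ 2 * cosh t,
        2 * sin φ * cos φ * (cosh (t / 2) - 1) * sinh (t / 2)],
      ![-(cos φ * sin φ ^ 2 * (cosh (t / 2) - 1) * sinh (t / 2)),
        -(sin φ * cos φ * (cosh (t / 2) - cosh t)),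
        2 * (1 + cos φ ^ 2 * (cosh (t / 2) - 1)) * sinh (t / 2)]]

/-- The entrywise derivative `M'(r,φ)` of `M` with respect to the first variable. -/
def M' (r φ : ℝ) : Matrix (Fin 3) (Fin 3) ℝ :=
  Matrix.of fun i j => deriv (fun t => M t φ i j) r

/-- The explicit form of the entrywise derivative `M' r φ`. -/
lemma M'_eq (r φ : ℝ) : M' r φ = Matrix.of
    ![![sinh (r / 2) / 2,
        -(sin φ * (cosh (r / 2) / 2)),
        0],
      ![-(sin φ * (sin φ ^ 2 * (sinh (r / 2) / 2) * sinh (r / 2)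
          + (cos φ ^ 2 + sin φ ^ 2 * cosh (r / 2)) * (cosh (r / 2) / 2))),
        cos φ ^ 2 * (sinh (r / 2) / 2) + sin φ ^ 2 * sinh r,
        2 * sin φ * cos φ * (sinh (r / 2) / 2 * sinh (r / 2)
          + (cosh (r / 2) - 1) * (cosh (r / 2) / 2))],
      ![-(cos φ * sin φ ^ 2 * (sinh (r / 2) / 2 * sinh (r / 2)
          + (cosh (r / 2) - 1) * (cosh (r / 2) / 2))),
        -(sin φ * cos φ * (sinh (r / 2) / 2 - sinh r)),
        2 * (cos φ ^ 2 * (sinh (r / 2) / 2) * sinh (r / 2)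
          + (1 + cos φ ^ 2 * (cosh (r / 2) - 1)) * (cosh (r / 2) / 2))]] := by
  have half : HasDerivAt (fun t : ℝ => t / 2) (1 / 2) r := (hasDerivAt_id r).div_const 2
  have hc : HasDerivAt (fun t : ℝ => cosh (t / 2)) (sinh (r / 2) * (1 / 2)) r := half.cosh
  have hs : HasDerivAt (fun t : ℝ => sinh (t / 2)) (cosh (r / 2) * (1 / 2)) r := half.sinh
  have hC : HasDerivAt (fun t : ℝ => cosh t) (sinh r) r := hasDerivAt_cosh r
  have hc1 := hc.sub_const 1
  ext i j
  fin_cases i <;> fin_cases j <;> simp only [M', M, Matrix.of_apply, Matrix.cons_val,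
    Fin.zero_eta, Fin.mk_one, Fin.reduceFinMk]
  · exact (hc.congr_deriv (by ring)).deriv
  · exact ((hs.const_mul (sin φ)).neg.congr_deriv (by ring)).deriv
  · exact deriv_const r 0
  · exact (((((hc.const_mul (sin φ ^ 2)).const_add (cos φ ^ 2)).const_mul (sin φ)).mul
      hs).neg.congr_deriv (by ring)).deriv
  · exact (((hc.const_mul (cos φ ^ 2)).add (hC.const_mul (sin φ ^ 2))).congr_deriv
      (by ring)).deriv
  · exact (((hc1.const_mul (2 * sin φ * cos φ)).mul hs).congr_deriv (by ring)).deriv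
  · exact (((hc1.const_mul (cos φ * sin φ ^ 2)).mul hs).neg.congr_deriv (by ring)).deriv
  · exact (((hc.sub hC).const_mul (sin φ * cos φ)).neg.congr_deriv (by ring)).deriv
  · exact (((((hc1.const_mul (cos φ ^ 2)).const_add 1).const_mul 2).mul hs).congr_deriv
      (by ring)).deriv

/-- The double-argument hyperbolic functions in terms of `t / 2`. -/
lemma cosh_eq_half (t : ℝ) : cosh t = cosh (t / 2) ^ 2 + sinh (t / 2) ^ 2 := by
  rw [← cosh_two_mul, mul_div_cancel₀ t two_ne_zero]

lemma sinh_eq_half (t : ℝ) : sinh t = 2 * sinh (t / 2) * cosh (t / 2) := by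
  rw [← sinh_two_mul, mul_div_cancel₀ t two_ne_zero]

lemma det_M (t φ : ℝ) : (M t φ).det = 2 * cosh (t / 2) ^ 3 * sinh (t / 2) := by
  have h1 := cosh_sq (t / 2)
  have h2 := cos_sq' φ
  rw [Matrix.det_fin_three]
  simp only [M, Matrix.of_apply, Matrix.cons_val, cosh_eq_half t]
  generalize cosh (t / 2) = c at *
  generalize sinh (t / 2) = s at *
  generalize cos φ = C at *
  generalize sin φ = S at *
  grind

/-- The determinant of the pencil `M' - x M`. -/
lemma det_M'_sub_smul_M (r φ x : ℝ) :
    (M' r φ - x • M r φ).det =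
      -(2 * cosh (r / 2) ^ 3 * sinh (r / 2)) * x ^ 3
        + cosh (r / 2) ^ 2 * (3 * sinh (r / 2) ^ 2 + cosh (r / 2) ^ 2) * x ^ 2
        - cosh (r / 2) * sinh (r / 2) * (3 / 2 * sinh (r / 2) ^ 2 + cosh (r / 2) ^ 2) * x
        + (sinh (r / 2) ^ 4 + 4 * sinh (r / 2) ^ 2 * cosh (r / 2) ^ 2 - cosh (r / 2) ^ 4
          + cos (2 * φ)) / 8 := by
  have h1 := cosh_sq (r / 2)
  have h2 := cos_sq' φ
  rw [Matrix.det_fin_three, M'_eq, cos_two_mul]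
  simp only [M, Matrix.sub_apply, Matrix.smul_apply, smul_eq_mul, Matrix.of_apply,
    Matrix.cons_val, cosh_eq_half r, sinh_eq_half r]
  generalize cosh (r / 2) = c at *
  generalize sinh (r / 2) = s at *
  generalize cos φ = C at *
  generalize sin φ = S at *
  grind

/-- for `r > 0`, `φ ∈ [0,π/2]` and `λ = (1/2)tanh(r/2)`, for all
`x ∈ ℝ`,
`det(M'(r,φ) M(r,φ)⁻¹ − x I₃) = −x³ + (3λ + 1/(4λ))x² − (1/2)(6λ² + 1)x
  + (16λ⁴ + 16λ² − 1 + (4λ² − 1)² cos 2φ)/(32λ)`. -/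
theorem char_poly_block (r : ℝ) (hr : 0 < r) (φ : ℝ) (hφ : φ ∈ Set.Icc 0 (π / 2))
    (lam : ℝ) (hlam : lam = 2⁻¹ * tanh (r / 2)) :
    ∀ x : ℝ,
      (M' r φ * (M r φ)⁻¹ - x • (1 : Matrix (Fin 3) (Fin 3) ℝ)).det
        = -x ^ 3 + (3 * lam + 1 / (4 * lam)) * x ^ 2
            - 2⁻¹ * (6 * lam ^ 2 + 1) * x
            + (16 * lam ^ 4 + 16 * lam ^ 2 - 1
                + (4 * lam ^ 2 - 1) ^ 2 * cos (2 * φ)) / (32 * lam) := by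
  intro x
  have hc : cosh (r / 2) ≠ 0 := (cosh_pos _).ne'
  have hs : sinh (r / 2) ≠ 0 := (sinh_pos_iff.2 (half_pos hr)).ne'
  have hdet : (M r φ).det ≠ 0 := by
    rw [det_M]
    positivity
  have hpencil : (M' r φ * (M r φ)⁻¹ - x • (1 : Matrix (Fin 3) (Fin 3) ℝ)) * M r φ
      = M' r φ - x • M r φ := by
    rw [sub_mul, Matrix.nonsing_inv_mul_cancel_right _ _ hdet.isUnit, smul_mul_assoc, one_mul]
  apply mul_right_cancel₀ hdet
  rw [← Matrix.det_mul, hpencil, det_M'_sub_smul_M, det_M, hlam, tanh_eq_sinh_div_cosh]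
  have h1 := cosh_sq (r / 2)
  generalize cosh (r / 2) = c at *
  generalize sinh (r / 2) = s at *
  have h4 : (4 * (2⁻¹ * (s / c)) ^ 2 - 1) ^ 2 = 1 / c ^ 4 := by
    field_simp
    grind
  rw [h4]
  field_simp
  ring
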